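/- arXiv:1007.3479 — 3 statements merged into one kernel-verified Lean document; each statement's English description precedes it below -/
import Mathlib

section
/- Let p be a prime (the statement in fact holds for any positive integer p). Let w1, w2 be elements of the Weyl group W, let λ ∈ C_ℤ, and let σ ∈ ℤΦ be an element of the root lattice. If w1·λ = w2·λ + pσ, then σ = 0. -/
/-!
Write `x = λ + ρ`, so the hypothesis reads `w₁ x = w₂ x + p σ`.  Since `λ` lies in the bottom
alcove, `|⟨x, β∨⟩| < p` for every root `β`, and this condition on `x` is invariant under the Weyl
group (`weyl_bounded_iff`).  Pairing the equation with `β∨` therefore gives `|⟨σ, β∨⟩| < 2` for all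
roots `β`.

On the other hand, if `σ ∈ ℤΦ` is nonzero, write it as a sum of roots `β₁ + ⋯ + β_k` with `k`
minimal.  Two roots at an obtuse angle have a sum that is a root or zero (`add_mem_or_eq_zero`), so
minimality forces `⟪β₁, β_j⟫ ≥ 0` for `j ≥ 2`, whence `⟨σ, β₁∨⟩ ≥ 2`.  This contradicts the bound
(`sum_eq_zero_of_pair_lt_two`), so `σ = 0`.
-/

open scoped RealInnerProductSpace

namespace PaperDNN

variable {E : Type*} [NormedAddCommGroup E] [InnerProductSpace ℝ E]

/-- The coroot pairing `⟨x, α∨⟩ = 2⟪x,α⟫/⟪α,α⟫`. -/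
noncomputable def pair (x a : E) : ℝ := 2 * ⟪x, a⟫ / ⟪a, a⟫

/-- `Φ` is a reduced irreducible root system in the Euclidean space `E`. -/
structure IsRootSystem (Φ : Finset E) : Prop where
  nonempty : Φ.Nonempty
  ne_zero : ∀ α ∈ Φ, α ≠ 0
  span_top : Submodule.span ℝ (Φ : Set E) = ⊤
  reduced : ∀ α ∈ Φ, ∀ t : ℝ, t • α ∈ Φ → t = 1 ∨ t = -1
  reflect_mem : ∀ α ∈ Φ, ∀ β ∈ Φ, β - pair β α • α ∈ Φ
  pair_int : ∀ α ∈ Φ, ∀ β ∈ Φ, ∃ n : ℤ, pair β α = (n : ℝ)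
  irred : ∀ S T : Set E, S ∪ T = (Φ : Set E) → S.Nonempty → T.Nonempty →
      (∀ a ∈ S, ∀ b ∈ T, ⟪a, b⟫ = 0) → False

/-- `Δ` is a base of simple roots for `Φ`: every root is a nonnegative or
nonpositive integral combination of the simple roots. -/
structure IsBase (Φ Δ : Finset E) : Prop where
  subset : Δ ⊆ Φ
  indep : LinearIndependent ℝ (fun a : {x // x ∈ Δ} => (a : E))
  root_decomp : ∀ β ∈ Φ, (∃ c : E → ℕ, β = ∑ α ∈ Δ, (c α : ℝ) • α) ∨
      (∃ c : E → ℕ, β = -(∑ α ∈ Δ, (c α : ℝ) • α))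

open Classical in
/-- The positive roots `Φ⁺` of `Φ` with respect to the base `Δ`. -/
noncomputable def posRoots (Φ Δ : Finset E) : Finset E :=
  Φ.filter fun β => ∃ c : E → ℕ, β = ∑ α ∈ Δ, (c α : ℝ) • α

/-- `ρ`, one-half the sum of the positive roots. -/
noncomputable def rho (Φ Δ : Finset E) : E := (2⁻¹ : ℝ) • ∑ β ∈ posRoots Φ Δ, β

/-- The Weyl group of `Φ`, the subgroup of `GL(E)` generated by the reflections
`s_α : x ↦ x − ⟨x,α∨⟩α` in the roots `α ∈ Φ`.  Applied to a subset `J` of the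
simple roots it yields the parabolic subgroup `W_J`. -/
def Weyl (Φ : Finset E) : Subgroup (E ≃ₗ[ℝ] E) :=
  Subgroup.closure { w : E ≃ₗ[ℝ] E | ∃ α ∈ Φ, ∀ x, w x = x - pair x α • α }

/-- The dot action `w·λ = w(λ+ρ) − ρ`. -/
noncomputable def dotAct (Φ Δ : Finset E) (w : E ≃ₗ[ℝ] E) (lam : E) : E :=
  w (lam + rho Φ Δ) - rho Φ Δ

/-- The weight lattice `X = {λ ∈ E : ⟨λ,α∨⟩ ∈ ℤ for all α ∈ Φ}`. -/
def weightLattice (Φ : Finset E) : Set E :=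
  { lam | ∀ α ∈ Φ, ∃ n : ℤ, pair lam α = (n : ℝ) }

/-- The root lattice `ℤΦ`. -/
def rootLattice (Φ : Finset E) : AddSubgroup E := AddSubgroup.closure (Φ : Set E)

/-- The bottom `p`-alcove `C_ℤ = {λ ∈ X : 0 < ⟨λ+ρ,β∨⟩ < p for all β ∈ Φ⁺}`. -/
def bottomAlcove (Φ Δ : Finset E) (p : ℕ) : Set E :=
  { lam ∈ weightLattice Φ | ∀ β ∈ posRoots Φ Δ,
      0 < pair (lam + rho Φ Δ) β ∧ pair (lam + rho Φ Δ) β < (p : ℝ) }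

/-- The closure `C̄_ℤ = {λ ∈ X : 0 ≤ ⟨λ+ρ,β∨⟩ ≤ p for all β ∈ Φ⁺}` of the
bottom `p`-alcove. -/
def closedAlcove (Φ Δ : Finset E) (p : ℕ) : Set E :=
  { lam ∈ weightLattice Φ | ∀ β ∈ posRoots Φ Δ,
      0 ≤ pair (lam + rho Φ Δ) β ∧ pair (lam + rho Φ Δ) β ≤ (p : ℝ) }

/-- Membership in `X⁺`, the set of dominant weights. -/
def isDominant (Φ Δ : Finset E) (lam : E) : Prop :=
  lam ∈ weightLattice Φ ∧ ∀ α ∈ Δ, 0 ≤ pair lam α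

/-- `a₀` is the highest short root of `Φ`: a root of minimal length such that
every root of the same length is `≤ a₀` (their difference is a nonnegative
integral combination of simple roots). -/
structure IsHighestShortRoot (Φ Δ : Finset E) (a₀ : E) : Prop where
  mem : a₀ ∈ Φ
  short : ∀ β ∈ Φ, ⟪a₀, a₀⟫ ≤ ⟪β, β⟫
  highest : ∀ β ∈ Φ, ⟪β, β⟫ = ⟪a₀, a₀⟫ →
      ∃ c : E → ℕ, a₀ - β = ∑ α ∈ Δ, (c α : ℝ) • α


lemma pair_self {a : E} (ha : a ≠ 0) : pair a a = 2 := by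
  have h : ⟪a, a⟫ ≠ 0 := inner_self_ne_zero.mpr ha
  unfold pair
  field_simp

lemma neg_mem_of_mem {Φ : Finset E} (hΦ : IsRootSystem Φ) {a : E} (ha : a ∈ Φ) : -a ∈ Φ := by
  have h := hΦ.reflect_mem a ha a ha
  rw [pair_self (hΦ.ne_zero a ha), two_smul] at h
  simpa using h

lemma pair_neg_right (x a : E) : pair x (-a) = -pair x a := by
  simp [pair, inner_neg_right, neg_div]

/-- The sum of two roots at an obtuse angle is a root or zero: if neither Cartan integer is `-1`,
both are at most `-2`, and then `‖a + b‖² ≤ 0`. -/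
lemma add_mem_or_eq_zero {Φ : Finset E} (hΦ : IsRootSystem Φ) {a b : E} (ha : a ∈ Φ) (hb : b ∈ Φ)
    (hab : ⟪a, b⟫ < 0) : a + b ∈ Φ ∨ a + b = 0 := by
  have haa : 0 < ⟪a, a⟫ := real_inner_self_pos.mpr (hΦ.ne_zero a ha)
  have hbb : 0 < ⟪b, b⟫ := real_inner_self_pos.mpr (hΦ.ne_zero b hb)
  obtain ⟨m, hm⟩ := hΦ.pair_int a ha b hb
  obtain ⟨n, hn⟩ := hΦ.pair_int b hb a ha
  have hma := hm
  have hnb := hn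
  unfold pair at hma hnb
  rw [real_inner_comm a b, div_eq_iff haa.ne'] at hma
  rw [div_eq_iff hbb.ne'] at hnb
  have hm0 : m < 0 := by
    have : (m : ℝ) < 0 := by
      by_contra! h
      nlinarith [mul_nonneg h haa.le]
    exact_mod_cast this
  have hn0 : n < 0 := by
    have : (n : ℝ) < 0 := by
      by_contra! h
      nlinarith [mul_nonneg h hbb.le]
    exact_mod_cast this
  by_cases hm1 : m = -1
  · left
    have h := hΦ.reflect_mem a ha b hb
    rw [hm, hm1] at h
    have e : b - (((-1 : ℤ)) : ℝ) • a = a + b := by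
      push_cast
      rw [neg_one_smul]
      abel
    rwa [e] at h
  by_cases hn1 : n = -1
  · left
    have h := hΦ.reflect_mem b hb a ha
    rw [hn, hn1] at h
    have e : a - (((-1 : ℤ)) : ℝ) • b = a + b := by
      push_cast
      rw [neg_one_smul]
      abel
    rwa [e] at h
  right
  have hm2 : (m : ℝ) ≤ -2 := by exact_mod_cast (by omega : m ≤ -2)
  have hn2 : (n : ℝ) ≤ -2 := by exact_mod_cast (by omega : n ≤ -2)
  have hle : ⟪a + b, a + b⟫ ≤ 0 := by
    rw [real_inner_add_add_self]
    nlinarith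
  exact inner_self_eq_zero.mp (le_antisymm hle real_inner_self_nonneg)

lemma exists_multiset_of_mem_rootLattice {Φ : Finset E} (hΦ : IsRootSystem Φ) {σ : E}
    (hσ : σ ∈ rootLattice Φ) : ∃ s : Multiset E, (∀ b ∈ s, b ∈ Φ) ∧ s.sum = σ := by
  unfold rootLattice at hσ
  induction hσ using AddSubgroup.closure_induction with
  | mem x hx => exact ⟨{x}, by simpa using hx, by simp⟩
  | zero => exact ⟨0, by simp, by simp⟩
  | add x y _ _ hx hy =>
    obtain ⟨s, hs, rfl⟩ := hx
    obtain ⟨t, ht, rfl⟩ := hy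
    refine ⟨s + t, fun b hb => ?_, by simp⟩
    rcases Multiset.mem_add.mp hb with h | h
    exacts [hs b h, ht b h]
  | neg x _ hx =>
    obtain ⟨s, hs, rfl⟩ := hx
    refine ⟨s.map (fun b => -b), fun b hb => ?_, s.sum_map_neg'⟩
    obtain ⟨c, hc, rfl⟩ := Multiset.mem_map.mp hb
    exact neg_mem_of_mem hΦ (hs c hc)

lemma inner_multiset_sum_nonneg (a : E) (t : Multiset E) (h : ∀ b ∈ t, 0 ≤ ⟪a, b⟫) :
    0 ≤ ⟪a, t.sum⟫ := by
  induction t using Multiset.induction_on with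
  | empty => simp
  | cons b t ih =>
    rw [Multiset.sum_cons, inner_add_right]
    exact add_nonneg (h b (Multiset.mem_cons_self b t))
      (ih fun c hc => h c (Multiset.mem_cons_of_mem hc))

/-- A sum of roots whose pairings with all coroots are less than `2` vanishes.  The induction on
the number of summands replaces two roots at an obtuse angle by their sum; when the first root `a`
makes no obtuse angle with the others, its pairing with the sum is at least `2`. -/
lemma sum_eq_zero_of_pair_lt_two {Φ : Finset E} (hΦ : IsRootSystem Φ) {σ : E}
    (hσ : ∀ β ∈ Φ, pair σ β < 2) (n : ℕ) :
    ∀ s : Multiset E, s.card = n → (∀ b ∈ s, b ∈ Φ) → s.sum = σ → σ = 0 := by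
  induction n using Nat.strong_induction_on with
  | _ n ih =>
    intro s hn hs hsum
    rcases s.empty_or_exists_mem with rfl | ⟨a, ha⟩
    · simpa using hsum.symm
    obtain ⟨t, rfl⟩ := Multiset.exists_cons_of_mem ha
    have haΦ := hs a ha
    by_cases hpos : ∀ b ∈ t, 0 ≤ ⟪a, b⟫
    · exfalso
      have h0 := inner_multiset_sum_nonneg a t hpos
      have haa : 0 < ⟪a, a⟫ := real_inner_self_pos.mpr (hΦ.ne_zero a haΦ)
      have h2 := hσ a haΦ
      unfold pair at h2
      rw [div_lt_iff₀ haa, ← hsum, Multiset.sum_cons, real_inner_comm, inner_add_right] at h2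
      linarith
    · push Not at hpos
      obtain ⟨b, hb, hab⟩ := hpos
      obtain ⟨u, rfl⟩ := Multiset.exists_cons_of_mem hb
      have hbΦ := hs b (Multiset.mem_cons_of_mem hb)
      have hu : ∀ c ∈ u, c ∈ Φ := fun c hc =>
        hs c (Multiset.mem_cons_of_mem (Multiset.mem_cons_of_mem hc))
      simp only [Multiset.card_cons] at hn
      simp only [Multiset.sum_cons, ← add_assoc] at hsum
      rcases add_mem_or_eq_zero hΦ haΦ hbΦ hab with h | h
      · refine ih (u.card + 1) (by omega) ((a + b) ::ₘ u) (by simp) (fun c hc => ?_) (by simpa)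
        rcases Multiset.mem_cons.mp hc with rfl | hc
        exacts [h, hu c hc]
      · rw [h, zero_add] at hsum
        exact ih u.card (by omega) u rfl hu hsum

/-- Reflections are self-adjoint and isometric, so pairing `s_α y` with `β∨` is pairing `y` with the
coroot of `s_α β`. -/
lemma pair_reflect {a : E} (ha : a ≠ 0) (y b : E) :
    pair (y - pair y a • a) b = pair y (b - pair b a • a) := by
  have haa : ⟪a, a⟫ ≠ 0 := inner_self_ne_zero.mpr ha
  have hnum : ⟪y - pair y a • a, b⟫ = ⟪y, b - pair b a • a⟫ := by
    simp only [inner_sub_left, inner_sub_right, real_inner_smul_left, real_inner_smul_right, pair]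
    rw [real_inner_comm b a]
    ring
  have hden : ⟪b - pair b a • a, b - pair b a • a⟫ = ⟪b, b⟫ := by
    simp only [inner_sub_left, inner_sub_right, real_inner_smul_left, real_inner_smul_right, pair]
    rw [real_inner_comm b a]
    field_simp
    ring
  change 2 * ⟪y - pair y a • a, b⟫ / ⟪b, b⟫ = _
  rw [hnum, ← hden]
  rfl

lemma reflect_bounded {Φ : Finset E} (hΦ : IsRootSystem Φ) {r : ℝ} {a y : E} (ha : a ∈ Φ)
    (hy : ∀ β ∈ Φ, |pair y β| < r) : ∀ β ∈ Φ, |pair (y - pair y a • a) β| < r := by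
  intro β hβ
  rw [pair_reflect (hΦ.ne_zero a ha)]
  exact hy _ (hΦ.reflect_mem a ha β hβ)

lemma weyl_bounded_iff {Φ : Finset E} (hΦ : IsRootSystem Φ) (r : ℝ) {w : E ≃ₗ[ℝ] E}
    (hw : w ∈ Weyl Φ) :
    ∀ y : E, (∀ β ∈ Φ, |pair y β| < r) ↔ ∀ β ∈ Φ, |pair (w y) β| < r := by
  unfold Weyl at hw
  induction hw using Subgroup.closure_induction with
  | mem w hw =>
    obtain ⟨a, ha, hwa⟩ := hw
    intro y
    constructor
    · intro hy
      rw [hwa]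
      exact reflect_bounded hΦ ha hy
    · intro hy
      -- the reflection is an involution
      have hinv : w y - pair (w y) a • a = y := by
        have h2 : pair (w y) a = -pair y a := by
          rw [hwa, pair_reflect (hΦ.ne_zero a ha), pair_self (hΦ.ne_zero a ha), two_smul,
            sub_add_cancel_left, pair_neg_right]
        rw [h2, hwa, neg_smul]
        abel
      have h := reflect_bounded hΦ ha hy
      rwa [hinv] at h
  | one => intro y; rfl
  | mul v w _ _ hv hw =>
    intro y
    rw [hw y, hv (w y)]
    rfl
  | inv w _ hw =>
    intro y
    rw [hw (w⁻¹ y)]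
    have : w (w⁻¹ y) = y := w.apply_symm_apply y
    rw [this]

lemma alcove_bounded {Φ Δ : Finset E} (hΦ : IsRootSystem Φ) (hΔ : IsBase Φ Δ) {p : ℕ} {lam : E}
    (hlam : lam ∈ bottomAlcove Φ Δ p) : ∀ β ∈ Φ, |pair (lam + rho Φ Δ) β| < (p : ℝ) := by
  intro β hβ
  rcases hΔ.root_decomp β hβ with hc | ⟨c, hc⟩
  · obtain ⟨h1, h2⟩ := hlam.2 β (by simpa [posRoots] using ⟨hβ, hc⟩)
    rw [abs_of_pos h1]
    exact h2
  · have hneg : -β ∈ posRoots Φ Δ := by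
      simp only [posRoots, Finset.mem_filter]
      exact ⟨neg_mem_of_mem hΦ hβ, c, by rw [hc, neg_neg]⟩
    obtain ⟨h1, h2⟩ := hlam.2 _ hneg
    rw [pair_neg_right] at h1 h2
    rw [abs_of_neg (by linarith)]
    exact h2

/-- Let `p` be a prime (the statement in fact holds for any positive
integer `p`).  Let `w₁, w₂` be elements of the Weyl group `W`, let `λ ∈ C_ℤ`, and
let `σ ∈ ℤΦ` be an element of the root lattice.  If `w₁·λ = w₂·λ + pσ`, then `σ = 0`. -/
theorem statement0
    (Φ Δ : Finset E) (hΦ : IsRootSystem Φ) (hΔ : IsBase Φ Δ)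
    (p : ℕ) (hp : p.Prime)
    (w₁ w₂ : E ≃ₗ[ℝ] E) (hw₁ : w₁ ∈ Weyl Φ) (hw₂ : w₂ ∈ Weyl Φ)
    (lam : E) (hlam : lam ∈ bottomAlcove Φ Δ p)
    (σ : E) (hσ : σ ∈ rootLattice Φ)
    (heq : dotAct Φ Δ w₁ lam = dotAct Φ Δ w₂ lam + (p : ℝ) • σ) :
    σ = 0 := by
  obtain ⟨s, hs, hsum⟩ := exists_multiset_of_mem_rootLattice hΦ hσ
  refine sum_eq_zero_of_pair_lt_two hΦ (fun β hβ => ?_) _ s rfl hs hsum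
  have hx := alcove_bounded hΦ hΔ hlam
  have h1 := (abs_lt.mp ((weyl_bounded_iff hΦ p hw₁ _).mp hx β hβ)).2
  have h2 := (abs_lt.mp ((weyl_bounded_iff hΦ p hw₂ _).mp hx β hβ)).1
  have he : w₁ (lam + rho Φ Δ) = w₂ (lam + rho Φ Δ) + (p : ℝ) • σ := by
    unfold dotAct at heq
    rw [sub_add_eq_add_sub] at heq
    exact sub_left_injective heq
  have hadd : pair (w₁ (lam + rho Φ Δ)) β = pair (w₂ (lam + rho Φ Δ)) β + p * pair σ β := by
    rw [he]
    simp only [pair, inner_add_left, real_inner_smul_left]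
    ring
  have hp0 : (0 : ℝ) < p := by exact_mod_cast hp.pos
  nlinarith

end PaperDNN
end

section
/- Let p be a prime with p > 2(h−1), where h is the Coxeter number of Φ. Let w1, w2, w3 ∈ W and suppose w1·0 + w2·0 = w3·0 + pσ for some σ ∈ ℤΦ. Then σ = 0. -/
/-!
Write `w₁ρ + w₂ρ - w₃ρ - ρ = pσ` and let `γ` be a short root, that is, a root of the same length
as `α₀`.  Each of the four terms pairs with `γ∨` to a number of absolute value at most `h - 1`:
after moving `w` to the other side, this says that `(ρ, δ) ≤ (ρ, α₀)` for every short root `δ`,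
which holds because `ρ` is dominant and `δ ≤ α₀` (`abs_inner_rho_le`).  Hence
`p |(σ, γ∨)| ≤ 4(h - 1) < 2p`, so `|(σ, γ∨)| < 2` for every short root `γ`.

On the other hand, a nonzero `σ ∈ ℤΦ` pairs to at least `2` with some short coroot.  By
irreducibility the short roots generate `ℤΦ` (`root_mem_closure_short`).  In a shortest expression
`σ = β₁ + ⋯ + βₖ` by short roots no two summands have negative inner product, since otherwise
their sum would be zero or a short root; so `(σ, β₁) ≥ (β₁, β₁)` (`exists_short_inner_ge`).
-/

open scoped RealInnerProductSpace

namespace PaperDNN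

variable {E : Type*} [NormedAddCommGroup E] [InnerProductSpace ℝ E]

/-- The roots of the same length as `a₀`; for `a₀` the highest short root, the short roots. -/
def shortRoots (Φ : Finset E) (a₀ : E) : Set E := { β | β ∈ Φ ∧ ⟪β, β⟫ = ⟪a₀, a₀⟫ }

lemma inner_self_pos_of_mem {Φ : Finset E} (hΦ : IsRootSystem Φ) {α : E} (hα : α ∈ Φ) :
    0 < ⟪α, α⟫ := real_inner_self_pos.2 (hΦ.ne_zero α hα)

lemma inner_reflect {α : E} (hα : 0 < ⟪α, α⟫) (x y : E) :
    ⟪x - pair x α • α, y - pair y α • α⟫ = ⟪x, y⟫ := by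
  simp only [pair, inner_sub_left, inner_sub_right, real_inner_smul_left, real_inner_smul_right]
  rw [real_inner_comm y α]
  field_simp
  ring

lemma inner_reflect_self {α : E} (hα : 0 < ⟪α, α⟫) (x : E) :
    ⟪x - pair x α • α, α⟫ = -⟪x, α⟫ := by
  simp only [pair, inner_sub_left, real_inner_smul_left]
  field_simp
  ring

lemma reflect_reflect {α : E} (hα : 0 < ⟪α, α⟫) (x : E) :
    (x - pair x α • α) - pair (x - pair x α • α) α • α = x := by
  have : pair (x - pair x α • α) α = - pair x α := by
    rw [pair, inner_reflect_self hα, pair]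
    ring
  rw [this]
  module

lemma neg_mem_roots {Φ : Finset E} (hΦ : IsRootSystem Φ) {α : E} (hα : α ∈ Φ) : -α ∈ Φ := by
  have h := hΦ.reflect_mem α hα α hα
  have hp : pair α α = 2 := by
    have := inner_self_pos_of_mem hΦ hα
    unfold pair
    field_simp
  rw [hp] at h
  convert h using 1
  module

lemma neg_mem_short {Φ : Finset E} (hΦ : IsRootSystem Φ) {a₀ β : E} (hβ : β ∈ shortRoots Φ a₀) :
    -β ∈ shortRoots Φ a₀ :=
  ⟨neg_mem_roots hΦ hβ.1, by rw [inner_neg_neg]; exact hβ.2⟩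

/-! ### The Weyl group -/

lemma weyl_spec {Φ : Finset E} (hΦ : IsRootSystem Φ) {w : E ≃ₗ[ℝ] E} (hw : w ∈ Weyl Φ) :
    (∀ x y, ⟪w x, w y⟫ = ⟪x, y⟫) ∧ ∀ β ∈ Φ, w β ∈ Φ := by
  induction hw using Subgroup.closure_induction with
  | mem w hw =>
    obtain ⟨α, hα, hw⟩ := hw
    refine ⟨fun x y => ?_, fun β hβ => ?_⟩
    · rw [hw, hw, inner_reflect (inner_self_pos_of_mem hΦ hα)]
    · rw [hw]
      exact hΦ.reflect_mem α hα β hβ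
  | one => exact ⟨fun _ _ => rfl, fun _ h => h⟩
  | mul u v _ _ hu hv =>
    exact ⟨fun x y => by rw [LinearEquiv.mul_apply, LinearEquiv.mul_apply, hu.1, hv.1],
      fun β hβ => hu.2 _ (hv.2 _ hβ)⟩
  | inv u _ hu =>
    have hinv : ∀ x, u (u⁻¹ x) = x := fun x => u.apply_symm_apply x
    refine ⟨fun x y => ?_, fun β hβ => ?_⟩
    · rw [← hu.1, hinv, hinv]
    · -- An injective self-map of the finite set `Φ` is surjective.
      obtain ⟨γ, hγ, rfl⟩ := Finset.surjOn_of_injOn_of_card_le u (fun x hx => hu.2 x hx)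
        u.injective.injOn le_rfl hβ
      have : u⁻¹ (u γ) = γ := u.symm_apply_apply γ
      rw [this]
      exact hγ

/-! ### Dominance of `ρ` -/

lemma coeff_eq {Φ Δ : Finset E} (hΔ : IsBase Φ Δ) {f g : E → ℝ}
    (h : ∑ α ∈ Δ, f α • α = ∑ α ∈ Δ, g α • α) : ∀ α ∈ Δ, f α = g α := by
  have hl : LinearIndepOn ℝ id (Δ : Set E) := hΔ.indep
  intro α hα
  have := linearIndepOn_finset_iff.1 hl (fun x => f x - g x)
    (by simp only [id, sub_smul, Finset.sum_sub_distrib, h, sub_self]) α hα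
  linarith

open Classical in
/-- A simple reflection permutes the positive roots other than the simple root itself. -/
lemma reflect_mem_pos {Φ Δ : Finset E} (hΦ : IsRootSystem Φ) (hΔ : IsBase Φ Δ) {α β : E}
    (hα : α ∈ Δ) (hβ : β ∈ (posRoots Φ Δ).erase α) :
    β - pair β α • α ∈ (posRoots Φ Δ).erase α := by
  obtain ⟨hne, hβ⟩ := Finset.mem_erase.1 hβ
  obtain ⟨hβΦ, c, hc⟩ := Finset.mem_filter.1 hβ
  have hαΦ := hΔ.subset hα
  have hpos := inner_self_pos_of_mem hΦ hαΦ
  have hsplit : ∀ f : E → ℝ, ∑ γ ∈ Δ, f γ • γ = f α • α + ∑ γ ∈ Δ.erase α, f γ • γ :=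
    fun f => (Finset.add_sum_erase Δ (fun γ => f γ • γ) hα).symm
  -- `β` is not a multiple of `α`, so another simple root occurs in it.
  have hex : ∃ δ ∈ Δ, δ ≠ α ∧ c δ ≠ 0 := by
    by_contra! hall
    have hz : ∑ γ ∈ Δ.erase α, (c γ : ℝ) • γ = 0 := Finset.sum_eq_zero fun γ hγ => by
      obtain ⟨h1, h2⟩ := Finset.mem_erase.1 hγ
      rw [hall γ h2 h1]
      simp
    have hβα : β = (c α : ℝ) • α := by rw [hc, hsplit, hz, add_zero]
    rcases hΦ.reduced α hαΦ (c α) (hβα ▸ hβΦ) with h1 | h1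
    · rw [h1, one_smul] at hβα
      exact hne hβα
    · have : (0 : ℝ) ≤ c α := Nat.cast_nonneg _
      linarith
  obtain ⟨δ, hδ, hδα, hcδ⟩ := hex
  have hmem := hΦ.reflect_mem α hαΦ β hβΦ
  refine Finset.mem_erase.2 ⟨fun heq => ?_, Finset.mem_filter.2 ⟨hmem, ?_⟩⟩
  · have hβα : β = (1 + pair β α) • α := by
      rw [add_smul, one_smul, ← sub_eq_iff_eq_add]
      exact heq
    have hs : ∑ γ ∈ Δ, (c γ : ℝ) • γ = ∑ γ ∈ Δ, (if γ = α then 1 + pair β α else 0) • γ := by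
      rw [← hc]
      simpa [ite_smul, hα] using hβα
    have := coeff_eq hΔ hs δ hδ
    rw [if_neg hδα] at this
    exact hcδ (by exact_mod_cast this)
  · rcases hΔ.root_decomp _ hmem with h | ⟨d, hd⟩
    · exact h
    · exfalso
      -- Subtracting a multiple of `α` leaves the coefficient at `δ`, which is positive.
      have hs : ∑ γ ∈ Δ, ((c γ : ℝ) - if γ = α then pair β α else 0) • γ
          = ∑ γ ∈ Δ, (-(d γ : ℝ)) • γ := by
        simp only [sub_smul, Finset.sum_sub_distrib, neg_smul, Finset.sum_neg_distrib, ← hd, ← hc]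
        simp [ite_smul, hα]
      have h1 := coeff_eq hΔ hs δ hδ
      rw [if_neg hδα] at h1
      have h2 : (0 : ℝ) ≤ d δ := Nat.cast_nonneg _
      have h3 : (0 : ℝ) < c δ := by exact_mod_cast Nat.pos_of_ne_zero hcδ
      linarith

open Classical in
/-- `ρ` is dominant: the positive roots other than `α` contribute `0` in total to `(2ρ, α)`, as
the reflection in `α` permutes them. -/
lemma inner_rho_simple_nonneg {Φ Δ : Finset E} (hΦ : IsRootSystem Φ) (hΔ : IsBase Φ Δ) {α : E}
    (hα : α ∈ Δ) : 0 ≤ ⟪rho Φ Δ, α⟫ := by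
  have hαΦ := hΔ.subset hα
  have hpos := inner_self_pos_of_mem hΦ hαΦ
  have hmem : α ∈ posRoots Φ Δ := Finset.mem_filter.2 ⟨hαΦ, fun γ => if γ = α then 1 else 0, by
    simp [ite_smul, hα]⟩
  have hsum : ∑ β ∈ (posRoots Φ Δ).erase α, ⟪β, α⟫
      = ∑ β ∈ (posRoots Φ Δ).erase α, -⟪β, α⟫ := by
    refine Finset.sum_bij' (fun β _ => β - pair β α • α) (fun β _ => β - pair β α • α)
      (fun β hβ => reflect_mem_pos hΦ hΔ hα hβ) (fun β hβ => reflect_mem_pos hΦ hΔ hα hβ)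
      (fun β _ => reflect_reflect hpos β) (fun β _ => reflect_reflect hpos β) (fun β _ => ?_)
    rw [inner_reflect_self hpos, neg_neg]
  rw [Finset.sum_neg_distrib] at hsum
  have := Finset.add_sum_erase (posRoots Φ Δ) (fun β => ⟪β, α⟫) hmem
  rw [rho, real_inner_smul_left, sum_inner, ← this]
  linarith

lemma inner_rho_short_le {Φ Δ : Finset E} (hΦ : IsRootSystem Φ) (hΔ : IsBase Φ Δ) {a₀ : E}
    (ha₀ : IsHighestShortRoot Φ Δ a₀) {β : E} (hβ : β ∈ shortRoots Φ a₀) :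
    ⟪rho Φ Δ, β⟫ ≤ ⟪rho Φ Δ, a₀⟫ := by
  obtain ⟨c, hc⟩ := ha₀.highest β hβ.1 hβ.2
  have h : 0 ≤ ⟪rho Φ Δ, a₀ - β⟫ := by
    rw [hc, inner_sum]
    refine Finset.sum_nonneg fun α hα => ?_
    rw [real_inner_smul_right]
    exact mul_nonneg (Nat.cast_nonneg _) (inner_rho_simple_nonneg hΦ hΔ hα)
  rw [inner_sub_right] at h
  linarith

lemma abs_inner_rho_le {Φ Δ : Finset E} (hΦ : IsRootSystem Φ) (hΔ : IsBase Φ Δ) {a₀ : E}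
    (ha₀ : IsHighestShortRoot Φ Δ a₀) {w : E ≃ₗ[ℝ] E} (hw : w ∈ Weyl Φ) {β : E}
    (hβ : β ∈ shortRoots Φ a₀) : |⟪w (rho Φ Δ), β⟫| ≤ ⟪rho Φ Δ, a₀⟫ := by
  obtain ⟨h1, h2⟩ := weyl_spec hΦ ((Weyl Φ).inv_mem hw)
  have hδ : w⁻¹ β ∈ shortRoots Φ a₀ := ⟨h2 _ hβ.1, by rw [h1]; exact hβ.2⟩
  have hinv : w⁻¹ (w (rho Φ Δ)) = rho Φ Δ := w.symm_apply_apply _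
  have h3 := inner_rho_short_le hΦ hΔ ha₀ hδ
  have h4 := inner_rho_short_le hΦ hΔ ha₀ (neg_mem_short hΦ hδ)
  rw [inner_neg_right] at h4
  rw [← h1, hinv, abs_le]
  constructor <;> linarith

/-! ### Short roots and the root lattice -/

lemma short_add {Φ : Finset E} (hΦ : IsRootSystem Φ) {a₀ β γ : E} (hβ : β ∈ shortRoots Φ a₀)
    (hγ : γ ∈ shortRoots Φ a₀) (hneg : ⟪β, γ⟫ < 0) :
    β + γ = 0 ∨ β + γ ∈ shortRoots Φ a₀ := by
  have hpos := inner_self_pos_of_mem hΦ hγ.1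
  have hlen : ⟪β + γ, β + γ⟫ = ⟪β, β⟫ + 2 * ⟪β, γ⟫ + ⟪γ, γ⟫ := real_inner_add_add_self β γ
  have hnn : 0 ≤ ⟪β + γ, β + γ⟫ := real_inner_self_nonneg
  obtain ⟨n, hn⟩ := hΦ.pair_int γ hγ.1 β hβ.1
  have hn' : 2 * ⟪β, γ⟫ = n * ⟪γ, γ⟫ := by
    rw [← hn, pair]
    field_simp
  have hl : ⟪β, β⟫ = ⟪γ, γ⟫ := hβ.2.trans hγ.2.symm
  have h1 : n < 0 := by
    have : (n : ℝ) < 0 := by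
      by_contra! hc
      nlinarith
    exact_mod_cast this
  have h2 : -2 ≤ n := by
    have : (-2 : ℝ) ≤ n := by
      by_contra! hc
      nlinarith
    exact_mod_cast this
  have h3 : n = -2 ∨ n = -1 := by omega
  rcases h3 with rfl | rfl
  · left
    push_cast at hn'
    exact inner_self_eq_zero.1 (by rw [hlen]; linarith : ⟪β + γ, β + γ⟫ = 0)
  · right
    push_cast at hn hn'
    have hr := hΦ.reflect_mem γ hγ.1 β hβ.1
    rw [hn, neg_one_smul, sub_neg_eq_add] at hr
    exact ⟨hr, by rw [hlen, ← hγ.2]; linarith⟩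

/-- Summands with negative inner product are merged until none are left to pair negatively with
the first one. -/
lemma exists_short_inner_ge {Φ : Finset E} (hΦ : IsRootSystem Φ) {a₀ : E} (n : ℕ) :
    ∀ M : Multiset E, M.card = n → (∀ x ∈ M, x ∈ shortRoots Φ a₀) → M.sum ≠ 0 →
      ∃ β ∈ shortRoots Φ a₀, ⟪β, β⟫ ≤ ⟪M.sum, β⟫ := by
  induction n using Nat.strong_induction_on with
  | _ n ih =>
  intro M hcard hM hne
  have hM0 : M ≠ 0 := by
    rintro rfl
    simp at hne
  obtain ⟨β, hβM⟩ := Multiset.exists_mem_of_ne_zero hM0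
  obtain ⟨N, rfl⟩ := Multiset.exists_cons_of_mem hβM
  have hβ := hM β hβM
  by_cases hex : ∃ γ ∈ N, ⟪β, γ⟫ < 0
  · obtain ⟨γ, hγN, hneg⟩ := hex
    obtain ⟨K, rfl⟩ := Multiset.exists_cons_of_mem hγN
    have hγ := hM γ (by simp)
    have hK : ∀ x ∈ K, x ∈ shortRoots Φ a₀ := fun x hx => hM x (by simp [hx])
    simp only [Multiset.card_cons] at hcard
    have hs : (β ::ₘ γ ::ₘ K).sum = (β + γ) + K.sum := by simp [add_assoc]
    rw [hs] at hne ⊢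
    rcases short_add hΦ hβ hγ hneg with h0 | hmem
    · rw [h0, zero_add] at hne ⊢
      exact ih K.card (by omega) K rfl hK hne
    · have := ih ((β + γ) ::ₘ K).card (by rw [Multiset.card_cons]; omega) _ rfl
        (fun x hx => by
          rcases Multiset.mem_cons.1 hx with rfl | hx
          · exact hmem
          · exact hK x hx) (by rwa [Multiset.sum_cons])
      rwa [Multiset.sum_cons] at this
  · push Not at hex
    refine ⟨β, hβ, ?_⟩
    have hnn : ∀ K : Multiset E, (∀ γ ∈ K, 0 ≤ ⟪β, γ⟫) → 0 ≤ ⟪β, K.sum⟫ := by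
      intro K
      induction K using Multiset.induction_on with
      | empty => simp
      | cons a K ihK =>
        intro h
        rw [Multiset.sum_cons, inner_add_right]
        exact add_nonneg (h a (by simp)) (ihK fun γ hγ => h γ (by simp [hγ]))
    have := hnn N hex
    rw [Multiset.sum_cons, inner_add_left, real_inner_comm β N.sum]
    linarith

/-- A root `β` longer than a short root `γ` and not orthogonal to it satisfies
`(γ, β∨) = ±1`, so `±β` is the difference of `γ` and its reflection in `β`. -/
lemma mem_closure_of_not_orthogonal {Φ Δ : Finset E} (hΦ : IsRootSystem Φ) {a₀ : E}
    (ha₀ : IsHighestShortRoot Φ Δ a₀) {β γ : E} (hβ : β ∈ Φ) (hγ : γ ∈ shortRoots Φ a₀)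
    (hne : ⟪γ, β⟫ ≠ 0) : β ∈ AddSubgroup.closure (shortRoots Φ a₀) := by
  rcases (ha₀.short β hβ).eq_or_lt with heq | hlt
  · exact AddSubgroup.subset_closure ⟨hβ, heq.symm⟩
  have hpos := inner_self_pos_of_mem hΦ hβ
  obtain ⟨n, hn⟩ := hΦ.pair_int β hβ γ hγ.1
  have hn' : 2 * ⟪γ, β⟫ = n * ⟪β, β⟫ := by
    rw [← hn, pair]
    field_simp
  have hcs : ⟪γ, β⟫ * ⟪γ, β⟫ ≤ ⟪γ, γ⟫ * ⟪β, β⟫ := real_inner_mul_inner_self_le γ β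
  rw [hγ.2] at hcs
  have hlt' : ⟪γ, β⟫ ^ 2 < ⟪β, β⟫ ^ 2 := by nlinarith
  have habs := abs_lt_of_sq_lt_sq' hlt' hpos.le
  have h1 : n < 2 := by
    have : (n : ℝ) < 2 := by
      by_contra! hc
      nlinarith
    exact_mod_cast this
  have h2 : -2 < n := by
    have : (-2 : ℝ) < n := by
      by_contra! hc
      nlinarith
    exact_mod_cast this
  have h3 : n ≠ 0 := by
    rintro rfl
    apply hne
    push_cast at hn'
    linarith
  have hr : γ - pair γ β • β ∈ shortRoots Φ a₀ :=
    ⟨hΦ.reflect_mem β hβ γ hγ.1, by rw [inner_reflect hpos]; exact hγ.2⟩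
  have hd := AddSubgroup.sub_mem _ (AddSubgroup.subset_closure hγ) (AddSubgroup.subset_closure hr)
  rw [sub_sub_cancel, hn] at hd
  have h4 : n = 1 ∨ n = -1 := by omega
  rcases h4 with rfl | rfl
  · simpa using hd
  · simpa using hd

/-- The short roots generate the root lattice.  The roots orthogonal to all short roots are
orthogonal to the remaining ones, which lie in the span of the short roots; by irreducibility
there are none. -/
lemma root_mem_closure_short {Φ Δ : Finset E} (hΦ : IsRootSystem Φ) {a₀ : E}
    (ha₀ : IsHighestShortRoot Φ Δ a₀) {β : E} (hβ : β ∈ Φ) :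
    β ∈ AddSubgroup.closure (shortRoots Φ a₀) := by
  by_cases hex : ∃ γ ∈ shortRoots Φ a₀, ⟪γ, β⟫ ≠ 0
  · obtain ⟨γ, hγ, hne⟩ := hex
    exact mem_closure_of_not_orthogonal hΦ ha₀ hβ hγ hne
  exfalso
  push Not at hex
  refine hΦ.irred { x | x ∈ Φ ∧ ∃ γ ∈ shortRoots Φ a₀, ⟪γ, x⟫ ≠ 0 }
    { x | x ∈ Φ ∧ ∀ γ ∈ shortRoots Φ a₀, ⟪γ, x⟫ = 0 } ?_
    ⟨a₀, ha₀.mem, a₀, ⟨ha₀.mem, rfl⟩, (inner_self_pos_of_mem hΦ ha₀.mem).ne'⟩ ⟨β, hβ, hex⟩ ?_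
  · ext x
    simp only [Set.mem_union, Set.mem_ofPred_eq, Finset.mem_coe]
    constructor
    · rintro (h | h) <;> exact h.1
    · intro hx
      by_cases hx' : ∃ γ ∈ shortRoots Φ a₀, ⟪γ, x⟫ ≠ 0
      · exact Or.inl ⟨hx, hx'⟩
      · push Not at hx'
        exact Or.inr ⟨hx, hx'⟩
  · rintro a ⟨ha, γ, hγ, hne⟩ b ⟨-, hb⟩
    have hmem := mem_closure_of_not_orthogonal hΦ ha₀ ha hγ hne
    clear ha hne
    induction hmem using AddSubgroup.closure_induction with
    | mem x hx => exact hb x hx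
    | zero => exact inner_zero_left _
    | add x y _ _ hx hy => rw [inner_add_left, hx, hy, add_zero]
    | neg x _ hx => rw [inner_neg_left, hx, neg_zero]

/-- A nonzero `σ ∈ ℤΦ` satisfies `(σ, β∨) ≥ 2` for some short root `β`. -/
lemma exists_short_of_mem_rootLattice {Φ Δ : Finset E} (hΦ : IsRootSystem Φ) {a₀ : E}
    (ha₀ : IsHighestShortRoot Φ Δ a₀) {σ : E} (hσ : σ ∈ rootLattice Φ) (hne : σ ≠ 0) :
    ∃ β ∈ shortRoots Φ a₀, ⟪β, β⟫ ≤ ⟪σ, β⟫ := by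
  have hle : rootLattice Φ ≤ AddSubgroup.closure (shortRoots Φ a₀) :=
    (AddSubgroup.closure_le _).2 fun β hβ => root_mem_closure_short hΦ ha₀ hβ
  obtain ⟨l, hl, rfl⟩ := AddSubmonoid.exists_list_of_mem_closure
    ((AddSubgroup.closure_toAddSubmonoid (shortRoots Φ a₀)).le (hle hσ))
  have := exists_short_inner_ge hΦ (a₀ := a₀) _ (l : Multiset E) rfl (fun x hx => by
    rcases hl x (by simpa using hx) with h | h
    · exact h
    · simpa using neg_mem_short hΦ h) (by simpa using hne)
  simpa using this

/-- Let `p` be a prime with `p > 2(h−1)`, where `h` is the Coxeter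
number of `Φ`.  Let `w₁, w₂, w₃ ∈ W` and suppose `w₁·0 + w₂·0 = w₃·0 + pσ` for
some `σ ∈ ℤΦ`.  Then `σ = 0`. -/
theorem statement2
    (Φ Δ : Finset E) (hΦ : IsRootSystem Φ) (hΔ : IsBase Φ Δ)
    (a₀ : E) (ha₀ : IsHighestShortRoot Φ Δ a₀)
    (h : ℕ) (hcox : (h : ℝ) = pair (rho Φ Δ) a₀ + 1)
    (p : ℕ) (hp : p.Prime) (hbig : 2 * (h - 1) < p)
    (w₁ w₂ w₃ : E ≃ₗ[ℝ] E) (hw₁ : w₁ ∈ Weyl Φ) (hw₂ : w₂ ∈ Weyl Φ) (hw₃ : w₃ ∈ Weyl Φ)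
    (σ : E) (hσ : σ ∈ rootLattice Φ)
    (heq : dotAct Φ Δ w₁ 0 + dotAct Φ Δ w₂ 0 = dotAct Φ Δ w₃ 0 + (p : ℝ) • σ) :
    σ = 0 := by
  by_contra hne
  obtain ⟨β, hβ, hge⟩ := exists_short_of_mem_rootLattice hΦ ha₀ hσ hne
  have hpos := inner_self_pos_of_mem hΦ ha₀.mem
  have b1 := (abs_le.1 (abs_inner_rho_le hΦ hΔ ha₀ hw₁ hβ)).2
  have b2 := (abs_le.1 (abs_inner_rho_le hΦ hΔ ha₀ hw₂ hβ)).2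
  have b3 := (abs_le.1 (abs_inner_rho_le hΦ hΔ ha₀ hw₃ hβ)).1
  have b4 := (abs_le.1 (abs_inner_rho_le hΦ hΔ ha₀ (Weyl Φ).one_mem hβ)).1
  have hone : (1 : E ≃ₗ[ℝ] E) (rho Φ Δ) = rho Φ Δ := rfl
  rw [hone] at b4
  have hcox' : ((h : ℝ) - 1) * ⟪a₀, a₀⟫ = 2 * ⟪rho Φ Δ, a₀⟫ := by
    rw [hcox, pair]
    field_simp
    ring
  -- The truncated subtraction `h - 1` only increases the real number `h - 1`.
  have hbig' : 2 * ((h : ℝ) - 1) < p := by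
    have h1 : 2 * h < p + 2 := by omega
    have h2 : 2 * (h : ℝ) < p + 2 := by exact_mod_cast h1
    linarith
  have hin : ⟪w₁ (rho Φ Δ), β⟫ + ⟪w₂ (rho Φ Δ), β⟫
      = ⟪w₃ (rho Φ Δ), β⟫ + ⟪rho Φ Δ, β⟫ + p * ⟪σ, β⟫ := by
    have := congrArg (fun x => ⟪x, β⟫) heq
    simp only [dotAct, zero_add, inner_add_left, inner_sub_left, real_inner_smul_left] at this
    linarith
  rw [hβ.2] at hge
  have h1 : (p : ℝ) * ⟪a₀, a₀⟫ ≤ p * ⟪σ, β⟫ := mul_le_mul_of_nonneg_left hge (Nat.cast_nonneg _)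
  have h2 := mul_lt_mul_of_pos_right hbig' hpos
  linarith

end PaperDNN
end

section
/- Let p be a prime with p > 3(h−1), where h is the Coxeter number of Φ. For i ∈ {1,2,3}, let μ_i ∈ X be a sum of distinct roots of Φ, i.e., μ_i = Σ_{γ ∈ S_i} γ for some subset S_i ⊆ Φ (possibly empty). If μ1 + μ2 = μ3 + pσ for some σ ∈ ℤΦ, then σ = 0. -/
/-!
Call a root short if it has minimal length, and put `N β = ∑_{γ ∈ Φ} |⟨γ, β∨⟩|`.

* Every root is a sum of short roots (`exists_multiset_root`), hence so is every element of `ℤΦ`.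
  In a shortest expression of `σ ≠ 0` as such a sum, any two summands have nonnegative inner
  product, as otherwise their sum is zero or a short root; pairing with one of the summands `β`
  gives `⟨σ, β∨⟩ ≥ 2` (`exists_two_le_pair`).
* `N` is invariant under reflections, and simple reflections lead from any short root up to the
  highest short root `α₀`, so `N β = N α₀` for `β` short (`absSum_eq`). As `α₀` is dominant,
  `N α₀ ≤ 2⟨2ρ, α₀∨⟩ = 4(h - 1)` (`absSum_highest_le`).
* Since `Φ = -Φ`, a sum `μ` of distinct roots satisfies `|⟨μ, β∨⟩| ≤ N β / 2`
  (`two_mul_abs_pair_sum_le`).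

Hence `2p ≤ p⟨σ, β∨⟩ = ⟨μ₁ + μ₂ - μ₃, β∨⟩ ≤ 3 · 2(h - 1)`, against `p > 3(h - 1)`.
-/

open scoped RealInnerProductSpace

namespace PaperDNN

variable {E : Type*} [NormedAddCommGroup E] [InnerProductSpace ℝ E]

/-! ### The pairing and reflections -/

lemma pair_add (x y a : E) : pair (x + y) a = pair x a + pair y a := by
  simp only [pair, inner_add_left]; ring

lemma pair_neg (x a : E) : pair (-x) a = -pair x a := by
  simp only [pair, inner_neg_left]; ring

lemma pair_smul (t : ℝ) (x a : E) : pair (t • x) a = t * pair x a := by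
  simp only [pair, real_inner_smul_left]; ring

lemma pair_sub (x y a : E) : pair (x - y) a = pair x a - pair y a := by
  rw [sub_eq_add_neg, pair_add, pair_neg]; ring

lemma pair_sum (S : Finset E) (a : E) : pair (∑ γ ∈ S, γ) a = ∑ γ ∈ S, pair γ a := by
  simp only [pair, sum_inner, Finset.mul_sum, Finset.sum_div]

lemma pair_mul_inner {a : E} (ha : a ≠ 0) (x : E) : pair x a * ⟪a, a⟫ = 2 * ⟪x, a⟫ := by
  have : ⟪a, a⟫ ≠ 0 := inner_self_ne_zero.mpr ha
  simp only [pair]; field_simp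

/-- The reflection `s_a`. -/
noncomputable def refl (a x : E) : E := x - pair x a • a

lemma refl_refl {a : E} (ha : a ≠ 0) (x : E) : refl a (refl a x) = x := by
  simp only [refl, pair_sub, pair_smul, pair_self ha]
  module

lemma inner_refl_left {a : E} (ha : a ≠ 0) (x y : E) : ⟪refl a x, y⟫ = ⟪x, refl a y⟫ := by
  have : ⟪a, a⟫ ≠ 0 := inner_self_ne_zero.mpr ha
  simp only [refl, inner_sub_left, inner_sub_right, real_inner_smul_left, real_inner_smul_right,
    pair, real_inner_comm y a]
  ring

lemma inner_refl_refl {a : E} (ha : a ≠ 0) (x : E) : ⟪refl a x, refl a x⟫ = ⟪x, x⟫ := by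
  rw [inner_refl_left ha, refl_refl ha]

lemma pair_refl_right {a : E} (ha : a ≠ 0) (x y : E) : pair x (refl a y) = pair (refl a x) y := by
  simp only [pair, inner_refl_refl ha, inner_refl_left ha]

variable {Φ Δ : Finset E}

lemma IsRootSystem.refl_mem (hΦ : IsRootSystem Φ) {a b : E} (ha : a ∈ Φ) (hb : b ∈ Φ) :
    refl a b ∈ Φ := hΦ.reflect_mem a ha b hb

lemma IsRootSystem.neg_mem (hΦ : IsRootSystem Φ) {a : E} (ha : a ∈ Φ) : -a ∈ Φ := by
  have h1 := hΦ.refl_mem ha ha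
  have h2 : refl a a = -a := by
    rw [refl, pair_self (hΦ.ne_zero a ha)]; module
  rwa [h2] at h1

/-! ### Short roots -/

/-- `b` is a root of minimal length. -/
def IsShort (Φ : Finset E) (b : E) : Prop := b ∈ Φ ∧ ∀ γ ∈ Φ, ⟪b, b⟫ ≤ ⟪γ, γ⟫

lemma IsShort.of_inner {b c : E} (hb : IsShort Φ b) (hc : c ∈ Φ) (h : ⟪c, c⟫ = ⟪b, b⟫) :
    IsShort Φ c := ⟨hc, fun γ hγ => h ▸ hb.2 γ hγ⟩

lemma IsShort.inner_eq {b c : E} (hb : IsShort Φ b) (hc : IsShort Φ c) : ⟪b, b⟫ = ⟪c, c⟫ :=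
  le_antisymm (hb.2 c hc.1) (hc.2 b hb.1)

lemma IsShort.refl (hΦ : IsRootSystem Φ) {a b : E} (hb : IsShort Φ b) (ha : a ∈ Φ) :
    IsShort Φ (refl a b) :=
  hb.of_inner (hΦ.refl_mem ha hb.1) (inner_refl_refl (hΦ.ne_zero a ha) b)

lemma IsShort.neg (hΦ : IsRootSystem Φ) {b : E} (hb : IsShort Φ b) : IsShort Φ (-b) :=
  hb.of_inner (hΦ.neg_mem hb.1) (by simp)

/-- Two short roots at an obtuse angle add up to zero or to a short root. -/
lemma IsShort.add (hΦ : IsRootSystem Φ) {b c : E} (hb : IsShort Φ b) (hc : IsShort Φ c)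
    (hneg : ⟪b, c⟫ < 0) : b + c = 0 ∨ IsShort Φ (b + c) := by
  have hc0 := hΦ.ne_zero c hc.1
  have hpos : 0 < ⟪c, c⟫ := real_inner_self_pos.mpr hc0
  obtain ⟨n, hn⟩ := hΦ.pair_int c hc.1 b hb.1
  have hm := pair_mul_inner hc0 b
  rw [hn] at hm
  have hbc := hb.inner_eq hc
  have hsq : 0 ≤ ⟪b + c, b + c⟫ := real_inner_self_nonneg
  have hexp : ⟪b + c, b + c⟫ = 2 * ⟪c, c⟫ + 2 * ⟪b, c⟫ := by
    rw [real_inner_add_add_self, hbc]; ring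
  have hn1 : n < 0 := by
    have : (n : ℝ) < 0 := by nlinarith
    exact_mod_cast this
  have hn2 : -2 ≤ n := by
    have : (-2 : ℝ) ≤ n := by nlinarith
    exact_mod_cast this
  obtain rfl | rfl : n = -2 ∨ n = -1 := by omega
  · left
    rw [← inner_self_eq_zero (𝕜 := ℝ), hexp]
    push_cast at hm; linarith
  · right
    have := hb.refl hΦ hc.1
    rwa [PaperDNN.refl, hn, show b - ((-1 : ℤ) : ℝ) • c = b + c by push_cast; module] at this

/-- By irreducibility, no root is orthogonal to all short roots: the roots orthogonal to all short
roots are orthogonal to all the other roots. -/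
lemma exists_short_inner_ne (hΦ : IsRootSystem Φ) {a₀ : E} (ha₀ : IsShort Φ a₀) {γ : E}
    (hγ : γ ∈ Φ) : ∃ s, IsShort Φ s ∧ ⟪γ, s⟫ ≠ 0 := by
  by_contra! hcon
  refine hΦ.irred {a | a ∈ Φ ∧ ∀ s, IsShort Φ s → ⟪a, s⟫ = 0}
    {a | a ∈ Φ ∧ ¬ ∀ s, IsShort Φ s → ⟪a, s⟫ = 0} ?_ ⟨γ, hγ, hcon⟩
    ⟨a₀, ha₀.1, fun h => hΦ.ne_zero a₀ ha₀.1 (inner_self_eq_zero.mp (h a₀ ha₀))⟩ ?_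
  · ext x
    simp only [Set.mem_union, Set.mem_ofPred_eq, Finset.mem_coe]
    tauto
  · rintro a ⟨-, ha⟩ b ⟨hb, hb'⟩
    push Not at hb'
    obtain ⟨s, hs, hbs⟩ := hb'
    have h1 := ha s hs
    -- `s_b s` is short as well, and `b` is a multiple of `s - s_b s`
    have h2 := ha _ (hs.refl hΦ hb)
    rw [refl, inner_sub_right, h1, real_inner_smul_right] at h2
    have h3 := pair_mul_inner (hΦ.ne_zero b hb) s
    rw [real_inner_comm b s] at h3
    have h4 : pair s b ≠ 0 := by
      intro h; rw [h] at h3; apply hbs; linarith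
    simpa [h4] using h2

/-- A root `γ` is short or a sum of two short roots `± (s - s_γ s)`. -/
lemma exists_multiset_root (hΦ : IsRootSystem Φ) {a₀ : E} (ha₀ : IsShort Φ a₀) {γ : E}
    (hγ : γ ∈ Φ) : ∃ m : Multiset E, (∀ x ∈ m, IsShort Φ x) ∧ m.sum = γ := by
  obtain ⟨s, hs, hne⟩ := exists_short_inner_ne hΦ ha₀ hγ
  rcases (hs.2 γ hγ).eq_or_lt with heq | hlt
  · exact ⟨{γ}, by simpa using hs.of_inner hγ heq.symm, by simp⟩
  have hs0 := hΦ.ne_zero s hs.1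
  have hγ0 := hΦ.ne_zero γ hγ
  have hpos : 0 < ⟪s, s⟫ := real_inner_self_pos.mpr hs0
  obtain ⟨n, hn⟩ := hΦ.pair_int γ hγ s hs.1
  have hm := pair_mul_inner hγ0 s
  rw [hn] at hm
  rw [real_inner_comm] at hne
  have hcs : ⟪s, γ⟫ * ⟪s, γ⟫ ≤ ⟪s, s⟫ * ⟪γ, γ⟫ := real_inner_mul_inner_self_le s γ
  -- Cauchy-Schwarz bounds `⟨s, γ∨⟩²` by `4 (s,s)/(γ,γ) < 4`
  have hn2 : n ^ 2 < 4 := by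
    have : (n : ℝ) ^ 2 < 4 := by
      have h1 : (n : ℝ) ^ 2 * ⟪γ, γ⟫ * ⟪γ, γ⟫ ≤ 4 * ⟪s, s⟫ * ⟪γ, γ⟫ := by
        calc (n : ℝ) ^ 2 * ⟪γ, γ⟫ * ⟪γ, γ⟫ = (n * ⟪γ, γ⟫) ^ 2 := by ring
          _ = 4 * (⟪s, γ⟫ * ⟪s, γ⟫) := by rw [hm]; ring
          _ ≤ _ := by linarith
      have h2 := le_of_mul_le_mul_right h1 (hpos.trans hlt)
      by_contra! h3
      nlinarith
    exact_mod_cast this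
  have hn0 : n ≠ 0 := by
    rintro rfl; apply hne; push_cast at hm; linarith
  have hr := hs.refl hΦ hγ
  have hre : refl γ s = s - (n : ℝ) • γ := by rw [refl, hn]
  have hn3 : n < 2 := by nlinarith
  have hn4 : -2 < n := by nlinarith
  obtain rfl | rfl : n = 1 ∨ n = -1 := by omega
  · refine ⟨{s, -refl γ s}, ?_, ?_⟩
    · simpa using ⟨hs, hr.neg hΦ⟩
    · simp [hre]
  · refine ⟨{-s, refl γ s}, ?_, ?_⟩
    · simpa using ⟨hs.neg hΦ, hr⟩
    · simp [hre]

lemma exists_multiset_lattice (hΦ : IsRootSystem Φ) {a₀ : E} (ha₀ : IsShort Φ a₀) {σ : E}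
    (hσ : σ ∈ rootLattice Φ) : ∃ m : Multiset E, (∀ x ∈ m, IsShort Φ x) ∧ m.sum = σ := by
  induction hσ using AddSubgroup.closure_induction with
  | mem x hx => exact exists_multiset_root hΦ ha₀ hx
  | zero => exact ⟨0, by simp, by simp⟩
  | add x y _ _ hx hy =>
    obtain ⟨m, hm, rfl⟩ := hx
    obtain ⟨k, hk, rfl⟩ := hy
    refine ⟨m + k, fun x hx => ?_, by simp⟩
    rcases Multiset.mem_add.mp hx with h | h
    exacts [hm x h, hk x h]
  | neg x _ hx =>
    obtain ⟨m, hm, rfl⟩ := hx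
    refine ⟨m.map Neg.neg, fun x hx => ?_, by rw [Multiset.sum_map_neg']⟩
    obtain ⟨y, hy, rfl⟩ := Multiset.mem_map.mp hx
    exact (hm y hy).neg hΦ

/-- A sum of vectors at nonobtuse angles to `b` pairs nonnegatively with `b`. -/
lemma pair_multiset_nonneg {b : E} (m : Multiset E) (hm : ∀ x ∈ m, 0 ≤ ⟪b, x⟫) :
    0 ≤ pair m.sum b := by
  induction m using Multiset.induction with
  | empty => simp [pair]
  | cons a m ih =>
    rw [Multiset.sum_cons, pair_add]
    have h1 := hm a (Multiset.mem_cons_self a m)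
    have h2 := ih fun x hx => hm x (Multiset.mem_cons_of_mem hx)
    have h3 : 0 ≤ pair a b := by
      rw [real_inner_comm] at h1
      exact div_nonneg (by linarith) real_inner_self_nonneg
    linarith

/-- A nonzero sum of short roots pairs to at least `2` with some short coroot. -/
lemma exists_two_le_pair (hΦ : IsRootSystem Φ) (k : ℕ) : ∀ m : Multiset E, m.card = k →
    (∀ x ∈ m, IsShort Φ x) → m.sum ≠ 0 → ∃ b, IsShort Φ b ∧ 2 ≤ pair m.sum b := by
  induction k using Nat.strong_induction_on with
  | _ k ih =>
    intro m hk hm h0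
    obtain ⟨b, hb⟩ := Multiset.exists_mem_of_ne_zero (s := m) (by rintro rfl; simp at h0)
    obtain ⟨t, rfl⟩ := Multiset.exists_cons_of_mem hb
    have hbs := hm b hb
    by_cases hall : ∀ x ∈ t, 0 ≤ ⟪b, x⟫
    · refine ⟨b, hbs, ?_⟩
      rw [Multiset.sum_cons, pair_add, pair_self (hΦ.ne_zero b hbs.1)]
      linarith [pair_multiset_nonneg t hall]
    · push Not at hall
      obtain ⟨c, hc, hneg⟩ := hall
      obtain ⟨u, rfl⟩ := Multiset.exists_cons_of_mem hc
      have hcs := hm c (Multiset.mem_cons_of_mem hc)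
      have hu : ∀ x ∈ u, IsShort Φ x := fun x hx =>
        hm x (Multiset.mem_cons_of_mem (Multiset.mem_cons_of_mem hx))
      have hsum : (b ::ₘ c ::ₘ u).sum = (b + c) + u.sum := by
        simp [add_assoc]
      rw [hsum] at h0 ⊢
      simp only [Multiset.card_cons] at hk
      rcases hbs.add hΦ hcs hneg with hz | hs
      · rw [hz, zero_add] at h0 ⊢
        exact ih u.card (by omega) u rfl hu h0
      · rw [← Multiset.sum_cons] at h0 ⊢
        refine ih (u.card + 1) (by omega) _ (by simp) ?_ h0
        intro x hx
        rcases Multiset.mem_cons.mp hx with rfl | hx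
        exacts [hs, hu x hx]

/-! ### The sum of the absolute values of the pairings with a coroot -/

/-- `N β = ∑_{γ ∈ Φ} |⟨γ, β∨⟩|`. -/
noncomputable def absSum (Φ : Finset E) (b : E) : ℝ := ∑ γ ∈ Φ, |pair γ b|

lemma absSum_refl (hΦ : IsRootSystem Φ) {a : E} (ha : a ∈ Φ) (b : E) :
    absSum Φ (refl a b) = absSum Φ b := by
  have ha0 := hΦ.ne_zero a ha
  refine Finset.sum_nbij' (refl a) (refl a) (fun x hx => hΦ.refl_mem ha hx)
    (fun x hx => hΦ.refl_mem ha hx) (fun x _ => refl_refl ha0 x) (fun x _ => refl_refl ha0 x)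
    (fun x _ => by rw [pair_refl_right ha0])

/-- The left side is `|⟨μ, b∨⟩ - ⟨μ', b∨⟩|` for `μ'` the sum of the roots outside `S`, since the
sum of all roots is zero. -/
lemma two_mul_abs_pair_sum_le (hΦ : IsRootSystem Φ) {S : Finset E} (hS : S ⊆ Φ) (b : E) :
    2 * |pair (∑ γ ∈ S, γ) b| ≤ absSum Φ b := by
  classical
  have hzero : ∑ γ ∈ Φ, pair γ b = 0 := by
    have : ∑ γ ∈ Φ, pair γ b = ∑ γ ∈ Φ, -pair γ b :=
      Finset.sum_nbij' (fun x => -x) (fun x => -x) (fun x hx => hΦ.neg_mem hx)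
        (fun x hx => hΦ.neg_mem hx) (fun x _ => neg_neg x) (fun x _ => neg_neg x)
        (fun x _ => by rw [pair_neg, neg_neg])
    rw [Finset.sum_neg_distrib] at this
    linarith
  have h1 := Finset.sum_sdiff hS (f := fun γ => pair γ b)
  have h2 := Finset.sum_sdiff hS (f := fun γ => |pair γ b|)
  have h3 := Finset.abs_sum_le_sum_abs (fun γ => pair γ b) S
  have h4 := Finset.abs_sum_le_sum_abs (fun γ => pair γ b) (Φ \ S)
  have h5 : ∑ γ ∈ Φ \ S, pair γ b = -∑ γ ∈ S, pair γ b := by linarith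
  rw [h5, abs_neg] at h4
  rw [pair_sum, absSum]
  linarith

/-! ### The highest short root -/

/-- The height functional. -/
lemma IsBase.exists_height (hΔ : IsBase Φ Δ) : ∃ f : E →ₗ[ℝ] ℝ, ∀ a ∈ Δ, f a = 1 := by
  let B := Module.Basis.extend hΔ.indep.linearIndepOn_id
  refine ⟨B.constr ℝ fun _ => (1 : ℝ), fun a ha => ?_⟩
  have hmem : a ∈ hΔ.indep.linearIndepOn_id.extend (Set.subset_univ _) :=
    Module.Basis.subset_extend _ (by simpa using ha)
  have : B ⟨a, hmem⟩ = a := by simp [B]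
  rw [← this, Module.Basis.constr_basis]

lemma IsHighestShortRoot.isShort {a₀ : E} (ha₀ : IsHighestShortRoot Φ Δ a₀) : IsShort Φ a₀ :=
  ⟨ha₀.mem, ha₀.short⟩

lemma height_sum {f : E →ₗ[ℝ] ℝ} (hf : ∀ a ∈ Δ, f a = 1) (c : E → ℕ) :
    f (∑ α ∈ Δ, (c α : ℝ) • α) = ((∑ α ∈ Δ, c α : ℕ) : ℝ) := by
  rw [map_sum]; push_cast
  exact Finset.sum_congr rfl fun α hα => by simp [hf α hα]

/-- The reflection of a root `b` in a simple root at an obtuse angle raises the height. -/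
lemma height_refl (hΦ : IsRootSystem Φ) {f : E →ₗ[ℝ] ℝ} {a b : E} (hfa : f a = 1) (ha : a ∈ Φ)
    (hb : b ∈ Φ) (hneg : ⟪b, a⟫ < 0) : f b + 1 ≤ f (refl a b) := by
  have ha0 := hΦ.ne_zero a ha
  have hpos : 0 < ⟪a, a⟫ := real_inner_self_pos.mpr ha0
  obtain ⟨n, hn⟩ := hΦ.pair_int a ha b hb
  have hm := pair_mul_inner ha0 b
  rw [hn] at hm
  have hn1 : n < 0 := by
    have : (n : ℝ) < 0 := by nlinarith
    exact_mod_cast this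
  have hn2 : (n : ℝ) ≤ -1 := by exact_mod_cast (by omega : n ≤ -1)
  rw [refl, map_sub, map_smul, hfa, hn, smul_eq_mul]
  linarith

lemma IsHighestShortRoot.dominant (hΦ : IsRootSystem Φ) (hΔ : IsBase Φ Δ) {a₀ : E}
    (ha₀ : IsHighestShortRoot Φ Δ a₀) {a : E} (ha : a ∈ Δ) : 0 ≤ ⟪a₀, a⟫ := by
  by_contra! hneg
  obtain ⟨f, hf⟩ := hΔ.exists_height
  have h1 := height_refl hΦ (hf a ha) (hΔ.subset ha) ha₀.mem hneg
  obtain ⟨c, hc⟩ := ha₀.highest _ (hΦ.refl_mem (hΔ.subset ha) ha₀.mem)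
    (inner_refl_refl (hΦ.ne_zero a (hΔ.subset ha)) a₀)
  have h2 := height_sum hf c
  rw [← hc, map_sub] at h2
  have h3 : (0 : ℝ) ≤ ((∑ α ∈ Δ, c α : ℕ) : ℝ) := Nat.cast_nonneg _
  linarith

lemma inner_sum_nonneg {b : E} (hb : ∀ a ∈ Δ, 0 ≤ ⟪b, a⟫) (c : E → ℕ) :
    0 ≤ ⟪b, ∑ α ∈ Δ, (c α : ℝ) • α⟫ := by
  rw [inner_sum]
  refine Finset.sum_nonneg fun a ha => ?_
  rw [real_inner_smul_right]
  exact mul_nonneg (Nat.cast_nonneg _) (hb a ha)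

/-- The induction is on the height of `α₀ - b`; the only dominant short root is `α₀`. -/
lemma absSum_eq (hΦ : IsRootSystem Φ) (hΔ : IsBase Φ Δ) {a₀ : E}
    (ha₀ : IsHighestShortRoot Φ Δ a₀) {b : E} (hb : IsShort Φ b) :
    absSum Φ b = absSum Φ a₀ := by
  obtain ⟨f, hf⟩ := hΔ.exists_height
  have key : ∀ k : ℕ, ∀ b, IsShort Φ b → f (a₀ - b) = k → absSum Φ b = absSum Φ a₀ := by
    intro k
    induction k using Nat.strong_induction_on with
    | _ k ih =>
      intro b hb hk
      obtain ⟨c, hc⟩ := ha₀.highest b hb.1 (hb.inner_eq ha₀.isShort)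
      by_cases hdom : ∀ a ∈ Δ, 0 ≤ ⟪b, a⟫
      · have h1 := inner_sum_nonneg hdom c
        rw [← hc, inner_sub_right] at h1
        -- `(α₀ - b, α₀ - b) = 2 (b, b) - 2 (b, α₀) ≤ 0`
        have h3 : ⟪a₀ - b, a₀ - b⟫ = 0 := by
          refine le_antisymm ?_ real_inner_self_nonneg
          rw [real_inner_sub_sub_self, ha₀.isShort.inner_eq hb, real_inner_comm b a₀]
          linarith
        rw [← sub_eq_zero.mp (inner_self_eq_zero.mp h3)]
      · push Not at hdom
        obtain ⟨a, ha, hneg⟩ := hdom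
        have haΦ := hΔ.subset ha
        have h1 := height_refl hΦ (hf a ha) haΦ hb.1 hneg
        have hs := hb.refl hΦ haΦ
        obtain ⟨d, hd⟩ := ha₀.highest _ hs.1 (hs.inner_eq ha₀.isShort)
        have h2 := height_sum hf d
        rw [← hd] at h2
        rw [← absSum_refl hΦ haΦ b]
        refine ih _ ?_ _ hs h2
        have : ((∑ α ∈ Δ, d α : ℕ) : ℝ) < k := by
          rw [← h2, ← hk, map_sub, map_sub]; linarith
        exact_mod_cast this
  obtain ⟨c, hc⟩ := ha₀.highest b hb.1 (hb.inner_eq ha₀.isShort)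
  exact key _ b hb (hc ▸ height_sum hf c)

/-- `α₀` pairs nonnegatively with the positive roots, and the other roots are their negatives. -/
lemma absSum_highest_le (hΦ : IsRootSystem Φ) (hΔ : IsBase Φ Δ) {a₀ : E}
    (ha₀ : IsHighestShortRoot Φ Δ a₀) : absSum Φ a₀ ≤ 4 * pair (rho Φ Δ) a₀ := by
  classical
  have hsub : posRoots Φ Δ ⊆ Φ := Finset.filter_subset _ _
  have hpos : ∑ γ ∈ posRoots Φ Δ, |pair γ a₀| = 2 * pair (rho Φ Δ) a₀ := by
    rw [rho, pair_smul, pair_sum, ← mul_assoc, mul_inv_cancel₀ two_ne_zero, one_mul]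
    refine Finset.sum_congr rfl fun γ hγ => abs_of_nonneg ?_
    obtain ⟨c, hc⟩ := (Finset.mem_filter.mp hγ).2
    have h1 := inner_sum_nonneg (fun a ha => ha₀.dominant hΦ hΔ ha) c
    rw [← hc, real_inner_comm] at h1
    exact div_nonneg (by linarith) real_inner_self_nonneg
  have hneg : ∑ γ ∈ Φ \ posRoots Φ Δ, |pair γ a₀| ≤ ∑ γ ∈ posRoots Φ Δ, |pair γ a₀| := by
    calc ∑ γ ∈ Φ \ posRoots Φ Δ, |pair γ a₀|
        = ∑ γ ∈ (Φ \ posRoots Φ Δ).image Neg.neg, |pair γ a₀| := by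
          rw [Finset.sum_image neg_injective.injOn]
          exact Finset.sum_congr rfl fun γ _ => by rw [pair_neg, abs_neg]
      _ ≤ _ := by
          refine Finset.sum_le_sum_of_subset_of_nonneg ?_ fun _ _ _ => abs_nonneg _
          intro x hx
          obtain ⟨γ, hγ, rfl⟩ := Finset.mem_image.mp hx
          obtain ⟨hγΦ, hγp⟩ := Finset.mem_sdiff.mp hγ
          rcases hΔ.root_decomp γ hγΦ with hc | ⟨c, hc⟩
          · exact absurd (Finset.mem_filter.mpr ⟨hγΦ, hc⟩) hγp
          · exact Finset.mem_filter.mpr ⟨hΦ.neg_mem hγΦ, c, by rw [hc, neg_neg]⟩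
  have h2 := Finset.sum_sdiff hsub (f := fun γ => |pair γ a₀|)
  rw [absSum]
  linarith

/-- Let `p` be a prime with `p > 3(h−1)`.  For `i ∈ {1,2,3}` let
`μᵢ` be a sum of distinct roots of `Φ`.  If `μ₁ + μ₂ = μ₃ + pσ` for some
`σ ∈ ℤΦ`, then `σ = 0`. -/
theorem statement5
    (Φ Δ : Finset E) (hΦ : IsRootSystem Φ) (hΔ : IsBase Φ Δ)
    (a₀ : E) (ha₀ : IsHighestShortRoot Φ Δ a₀)
    (h : ℕ) (hcox : (h : ℝ) = pair (rho Φ Δ) a₀ + 1)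
    (p : ℕ) (hp : p.Prime) (hbig : 3 * (h - 1) < p)
    (S₁ S₂ S₃ : Finset E) (hS₁ : S₁ ⊆ Φ) (hS₂ : S₂ ⊆ Φ) (hS₃ : S₃ ⊆ Φ)
    (μ₁ μ₂ μ₃ : E)
    (hμ₁ : μ₁ = ∑ γ ∈ S₁, γ) (hμ₂ : μ₂ = ∑ γ ∈ S₂, γ) (hμ₃ : μ₃ = ∑ γ ∈ S₃, γ)
    (σ : E) (hσ : σ ∈ rootLattice Φ)
    (heq : μ₁ + μ₂ = μ₃ + (p : ℝ) • σ) :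
    σ = 0 := by
  by_contra hne
  obtain ⟨m, hm, rfl⟩ := exists_multiset_lattice hΦ ha₀.isShort hσ
  obtain ⟨b, hb, h2⟩ := exists_two_le_pair hΦ _ m rfl hm hne
  have hN : absSum Φ b ≤ 4 * ((h : ℝ) - 1) := by
    rw [absSum_eq hΦ hΔ ha₀ hb, hcox, add_sub_cancel_right]
    exact absSum_highest_le hΦ hΔ ha₀
  have b₁ := two_mul_abs_pair_sum_le hΦ hS₁ b
  have b₂ := two_mul_abs_pair_sum_le hΦ hS₂ b
  have b₃ := two_mul_abs_pair_sum_le hΦ hS₃ b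
  rw [← hμ₁] at b₁
  rw [← hμ₂] at b₂
  rw [← hμ₃] at b₃
  have e := congrArg (fun x => pair x b) heq
  simp only [pair_add, pair_smul] at e
  have hp2 : (p : ℝ) * 2 ≤ p * pair m.sum b := mul_le_mul_of_nonneg_left h2 (Nat.cast_nonneg p)
  have hfin : (p : ℝ) ≤ 3 * ((h : ℝ) - 1) := by
    linarith [le_abs_self (pair μ₁ b), le_abs_self (pair μ₂ b), neg_abs_le (pair μ₃ b)]
  have : p + 3 ≤ 3 * h := by
    have : (p : ℝ) + 3 ≤ 3 * h := by linarith
    exact_mod_cast this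
  omega

end PaperDNN
end
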